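/- Let V = ⊕_{p,q} V^{p,q} be a bounded double complex of finite-dimensional complex vector spaces with differentials ∂, δ (∂²=δ²=∂δ+δ∂=0), d = ∂+δ. Define for each k: h_BC^k := Σ_{p+q=k} dim (ker∂∩kerδ∩V^{p,q})/(Im ∂δ ∩ V^{p,q}), h_A^k := Σ_{p+q=k} dim (ker ∂δ ∩ V^{p,q})/((Im∂ + Imδ) ∩ V^{p,q}), and b_k := dim (ker d ∩ V^k)/(Im d ∩ V^k) where V^k = ⊕_{p+q=k} V^{p,q}. Then h_BC^k + h_A^k ≥ 2 b_k for every k, with equality for all k if and only if ker∂ ∩ kerδ ∩ Im d = Im ∂δ. -/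

import Mathlib

open LinearMap

/-- Bott-Chern numbers in total degree `k` of a bounded double complex with
differentials `D = ∂`, `E = δ`. -/
noncomputable def bcSum {V : Type*} [AddCommGroup V] [Module ℂ V]
    (Vpq : ℕ → ℕ → Submodule ℂ V) (D E : V →ₗ[ℂ] V) (k : ℕ) : ℕ :=
  ∑ p ∈ Finset.range (k + 1),
    (Module.finrank ℂ ↥(ker D ⊓ ker E ⊓ Vpq p (k - p)) -
      Module.finrank ℂ ↥(range (D ∘ₗ E) ⊓ Vpq p (k - p)))

/-- Aeppli numbers in total degree `k`. -/
noncomputable def aSum {V : Type*} [AddCommGroup V] [Module ℂ V]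
    (Vpq : ℕ → ℕ → Submodule ℂ V) (D E : V →ₗ[ℂ] V) (k : ℕ) : ℕ :=
  ∑ p ∈ Finset.range (k + 1),
    (Module.finrank ℂ ↥(ker (D ∘ₗ E) ⊓ Vpq p (k - p)) -
      Module.finrank ℂ ↥((range D ⊔ range E) ⊓ Vpq p (k - p)))

/-- de Rham (total) Betti number in degree `k` for `d = D + E`. -/
noncomputable def bNum {V : Type*} [AddCommGroup V] [Module ℂ V]
    (Vpq : ℕ → ℕ → Submodule ℂ V) (D E : V →ₗ[ℂ] V) (k : ℕ) : ℕ :=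
  Module.finrank ℂ ↥(ker (D + E) ⊓ ⨆ p ∈ Finset.range (k + 1), Vpq p (k - p)) -
    Module.finrank ℂ ↥(range (D + E) ⊓ ⨆ p ∈ Finset.range (k + 1), Vpq p (k - p))

/-- The double complex together with its bigraded projections. -/
structure DCSetup {V : Type*} [AddCommGroup V] [Module ℂ V]
    (W : ℕ → ℕ → Submodule ℂ V) (P : ℕ → ℕ → V →ₗ[ℂ] V) (D E : V →ₗ[ℂ] V) : Prop where
  mem : ∀ p q x, P p q x ∈ W p q
  same : ∀ p q x, x ∈ W p q → P p q x = x
  diff : ∀ p q p' q' x, x ∈ W p' q' → (p ≠ p' ∨ q ≠ q') → P p q x = 0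
  tot : ∀ x : V, ∃ s : Finset (ℕ × ℕ), x = ∑ i ∈ s, P i.1 i.2 x
  dgr : ∀ p q, ∀ x ∈ W p q, D x ∈ W (p + 1) q
  egr : ∀ p q, ∀ x ∈ W p q, E x ∈ W p (q + 1)
  dd : ∀ x, D (D x) = 0
  ee : ∀ x, E (E x) = 0
  de : ∀ x, D (E x) + E (D x) = 0

/-- Total-degree projection. -/
noncomputable def tauP {V : Type*} [AddCommGroup V] [Module ℂ V]
    (P : ℕ → ℕ → V →ₗ[ℂ] V) (k : ℕ) : V →ₗ[ℂ] V :=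
  ∑ p ∈ Finset.range (k + 1), P p (k - p)

/-- Total-degree part. -/
noncomputable def totP {V : Type*} [AddCommGroup V] [Module ℂ V]
    (P : ℕ → ℕ → V →ₗ[ℂ] V) (k : ℕ) : Submodule ℂ V :=
  LinearMap.eqLocus (tauP P k) LinearMap.id

/-- Stability under all bigraded projections. -/
def HomogP {V : Type*} [AddCommGroup V] [Module ℂ V]
    (P : ℕ → ℕ → V →ₗ[ℂ] V) (U : Submodule ℂ V) : Prop :=
  ∀ p q x, x ∈ U → P p q x ∈ U

/-- Filtration step. -/
noncomputable def filP {V : Type*} [AddCommGroup V] [Module ℂ V]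
    (P : ℕ → ℕ → V →ₗ[ℂ] V) (U : Submodule ℂ V) (k j : ℕ) : Submodule ℂ V :=
  U ⊓ totP P k ⊓ ⨅ p, ⨅ (_ : j ≤ p), ker (P p (k - p))

section helpers
variable {V : Type*} [AddCommGroup V] [Module ℂ V]
    {W : ℕ → ℕ → Submodule ℂ V} {P : ℕ → ℕ → V →ₗ[ℂ] V} {D E : V →ₗ[ℂ] V}

theorem tauP_apply (k : ℕ) (x : V) :
    tauP P k x = ∑ p ∈ Finset.range (k + 1), P p (k - p) x := by
  simp [tauP]

theorem mem_totP {k : ℕ} {x : V} : x ∈ totP P k ↔ tauP P k x = x := by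
  simp [totP, LinearMap.mem_eqLocus]

theorem mem_filP {U : Submodule ℂ V} {k j : ℕ} {x : V} :
    x ∈ filP P U k j ↔ (x ∈ U ∧ x ∈ totP P k) ∧ ∀ p, j ≤ p → P p (k - p) x = 0 := by
  simp [filP, Submodule.mem_iInf]

theorem tauP_swap (k : ℕ) : tauP (fun p q => P q p) k = tauP P k := by
  ext x
  rw [tauP_apply, tauP_apply, ← Finset.sum_range_reflect]
  refine Finset.sum_congr rfl fun p hp => ?_
  have := Finset.mem_range.1 hp
  congr 2
  congr 1 <;> omega

theorem totP_swap (k : ℕ) : totP (fun p q => P q p) k = totP P k := by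
  simp [totP, tauP_swap]

theorem DCSetup.swap (h : DCSetup W P D E) :
    DCSetup (fun p q => W q p) (fun p q => P q p) E D where
  mem p q x := h.mem q p x
  same p q x hx := h.same q p x hx
  diff p q p' q' x hx hne := h.diff q p q' p' x hx hne.symm
  tot x := by
    obtain ⟨s, hs⟩ := h.tot x
    refine ⟨s.map (Equiv.prodComm ℕ ℕ).toEmbedding, ?_⟩
    rw [Finset.sum_map]
    simpa using hs
  dgr p q x hx := h.egr q p x hx
  egr p q x hx := h.dgr q p x hx
  dd := h.ee
  ee := h.dd
  de x := by rw [add_comm]; exact h.de x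

theorem DCSetup.ed (h : DCSetup W P D E) (x : V) : E (D x) = - D (E x) := by
  rw [eq_neg_iff_add_eq_zero, add_comm]; exact h.de x

theorem DCSetup.ext_lin (h : DCSetup W P D E) {f g : V →ₗ[ℂ] V}
    (hfg : ∀ p q x, x ∈ W p q → f x = g x) (x : V) : f x = g x := by
  obtain ⟨s, hs⟩ := h.tot x
  rw [hs, map_sum, map_sum]
  exact Finset.sum_congr rfl fun i _ => hfg _ _ _ (h.mem _ _ _)

theorem DCSetup.projD (h : DCSetup W P D E) (p q : ℕ) (x : V) :
    P (p + 1) q (D x) = D (P p q x) := by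
  refine h.ext_lin (f := P (p + 1) q ∘ₗ D) (g := D ∘ₗ P p q) ?_ x
  intro a b x hx
  simp only [LinearMap.comp_apply]
  have hdx := h.dgr a b x hx
  by_cases hab : p = a ∧ q = b
  · obtain ⟨rfl, rfl⟩ := hab
    rw [h.same _ _ _ hx, h.same _ _ _ hdx]
  · rw [h.diff _ _ _ _ _ hx (by omega), h.diff _ _ _ _ _ hdx (by omega), map_zero]

theorem DCSetup.projD0 (h : DCSetup W P D E) (q : ℕ) (x : V) :
    P 0 q (D x) = 0 := by
  refine h.ext_lin (f := P 0 q ∘ₗ D) (g := 0) ?_ x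
  intro a b x hx
  simp only [LinearMap.comp_apply]
  exact h.diff _ _ _ _ _ (h.dgr a b x hx) (by omega)

theorem DCSetup.projE (h : DCSetup W P D E) (p q : ℕ) (x : V) :
    P p (q + 1) (E x) = E (P p q x) := h.swap.projD q p x

theorem DCSetup.projE0 (h : DCSetup W P D E) (p : ℕ) (x : V) :
    P p 0 (E x) = 0 := h.swap.projD0 p x

theorem DCSetup.homogKerD (h : DCSetup W P D E) : HomogP P (ker D) := by
  intro p q x hx
  rw [mem_ker] at hx ⊢
  rw [← h.projD, hx, map_zero]

theorem HomogP.swap {U : Submodule ℂ V} (hU : HomogP P U) : HomogP (fun p q => P q p) U :=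
  fun p q x hx => hU q p x hx

theorem DCSetup.homogKerE (h : DCSetup W P D E) : HomogP P (ker E) :=
  fun p q x hx => h.swap.homogKerD q p x hx

theorem DCSetup.homogRangeD (h : DCSetup W P D E) : HomogP P (range D) := by
  rintro p q _ ⟨y, rfl⟩
  cases p with
  | zero => rw [h.projD0]; exact zero_mem _
  | succ p => rw [h.projD]; exact ⟨_, rfl⟩

theorem DCSetup.homogRangeE (h : DCSetup W P D E) : HomogP P (range E) :=
  fun p q x hx => h.swap.homogRangeD q p x hx

theorem DCSetup.homogKerDE (h : DCSetup W P D E) : HomogP P (ker (D ∘ₗ E)) := by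
  intro p q x hx
  simp only [mem_ker, LinearMap.comp_apply] at hx ⊢
  rw [← h.projE, ← h.projD, hx, map_zero]

theorem DCSetup.homogRangeDE (h : DCSetup W P D E) : HomogP P (range (D ∘ₗ E)) := by
  rintro p q _ ⟨y, rfl⟩
  simp only [LinearMap.comp_apply]
  cases p with
  | zero => rw [h.projD0]; exact zero_mem _
  | succ p =>
    rw [h.projD]
    cases q with
    | zero => rw [h.projE0, map_zero]; exact zero_mem _
    | succ q => rw [h.projE]; exact ⟨_, rfl⟩

theorem HomogP.inf {U U' : Submodule ℂ V} (h : HomogP P U) (h' : HomogP P U') :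
    HomogP P (U ⊓ U') := fun p q x hx => ⟨h p q x hx.1, h' p q x hx.2⟩

theorem HomogP.sup {U U' : Submodule ℂ V} (h : HomogP P U) (h' : HomogP P U') :
    HomogP P (U ⊔ U') := by
  intro p q x hx
  obtain ⟨y, hy, z, hz, rfl⟩ := Submodule.mem_sup.1 hx
  rw [map_add]
  exact Submodule.add_mem_sup (h p q y hy) (h' p q z hz)

theorem HomogP.tau {U : Submodule ℂ V} (h : HomogP P U) (k : ℕ) {x : V} (hx : x ∈ U) :
    tauP P k x ∈ U := by
  rw [tauP_apply]
  exact Submodule.sum_mem _ fun p _ => h _ _ _ hx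

theorem DCSetup.tau_of_mem (h : DCSetup W P D E) {k p q : ℕ} (hk : p + q = k) {x : V}
    (hx : x ∈ W p q) : tauP P k x = x := by
  rw [tauP_apply, Finset.sum_eq_single p]
  · rw [show k - p = q by omega]; exact h.same _ _ _ hx
  · intro b hb hne
    exact h.diff _ _ _ _ _ hx (Or.inl hne)
  · intro hp; simp at hp; omega

theorem DCSetup.le_tot (h : DCSetup W P D E) {k p q : ℕ} (hk : p + q = k) :
    W p q ≤ totP P k := fun _ hx => mem_totP.2 (h.tau_of_mem hk hx)

theorem DCSetup.tau_mem (h : DCSetup W P D E) (k : ℕ) (x : V) : tauP P k x ∈ totP P k := by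
  rw [tauP_apply]
  refine Submodule.sum_mem _ fun p hp => ?_
  have := Finset.mem_range.1 hp
  exact h.le_tot (by omega) (h.mem p (k - p) x)

theorem DCSetup.iSup_eq (h : DCSetup W P D E) (k : ℕ) :
    (⨆ p ∈ Finset.range (k + 1), W p (k - p)) = totP P k := by
  apply le_antisymm
  · refine iSup₂_le fun p hp => ?_
    have := Finset.mem_range.1 hp
    exact h.le_tot (by omega)
  · intro x hx
    rw [← mem_totP.1 hx, tauP_apply]
    refine Submodule.sum_mem _ fun p hp => ?_
    exact (le_iSup₂ (f := fun p (_ : p ∈ Finset.range (k + 1)) => W p (k - p)) p hp)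
      (h.mem p (k - p) x)

theorem DCSetup.tauD (h : DCSetup W P D E) (k : ℕ) (x : V) :
    tauP P (k + 1) (D x) = D (tauP P k x) := by
  rw [tauP_apply, tauP_apply, Finset.sum_range_succ', h.projD0, add_zero, map_sum]
  refine Finset.sum_congr rfl fun p hp => ?_
  rw [h.projD]
  congr 3
  omega

theorem DCSetup.tauD0 (h : DCSetup W P D E) (x : V) : tauP P 0 (D x) = 0 := by
  simp [tauP_apply, h.projD0]

theorem DCSetup.tauE (h : DCSetup W P D E) (k : ℕ) (x : V) :
    tauP P (k + 1) (E x) = E (tauP P k x) := by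
  have := h.swap.tauD k x
  rwa [tauP_swap (P := P), tauP_swap (P := P)] at this

theorem DCSetup.tauE0 (h : DCSetup W P D E) (x : V) : tauP P 0 (E x) = 0 := by
  simp [tauP_apply, h.projE0]

/-- Filtration dimension count. -/
theorem DCSetup.finrank_fil [FiniteDimensional ℂ V] (h : DCSetup W P D E)
    (U : Submodule ℂ V) (k j : ℕ) :
    Module.finrank ℂ ↥(filP P U k j) = ∑ p ∈ Finset.range j,
      Module.finrank ℂ ↥((filP P U k (p + 1)).map (P p (k - p))) := by
  induction j with
  | zero =>
    have : filP P U k 0 = ⊥ := by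
      rw [eq_bot_iff]
      intro x hx
      obtain ⟨⟨_, h2⟩, h3⟩ := mem_filP.1 hx
      rw [Submodule.mem_bot, ← mem_totP.1 h2, tauP_apply]
      exact Finset.sum_eq_zero fun p _ => h3 p (Nat.zero_le _)
    rw [this]; simp
  | succ j ih =>
    rw [Finset.sum_range_succ, ← ih]
    have hrn := LinearMap.finrank_range_add_finrank_ker
      ((P j (k - j)).domRestrict (filP P U k (j + 1)))
    rw [LinearMap.range_domRestrict] at hrn
    have hk : Module.finrank ℂ ↥(ker ((P j (k - j)).domRestrict (filP P U k (j + 1))))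
        = Module.finrank ℂ ↥(filP P U k j) := by
      rw [← Submodule.finrank_map_subtype_eq]
      congr 2
      all_goals
      ext x
      simp only [Submodule.mem_map, mem_ker, Submodule.subtype_apply, Subtype.exists,
        LinearMap.domRestrict_apply, exists_and_right, exists_eq_right]
      constructor
      · rintro ⟨h1, h2⟩
        rw [mem_filP] at h1 ⊢
        refine ⟨h1.1, fun p hp => ?_⟩
        rcases hp.eq_or_lt with rfl | hp
        · exact h2
        · exact h1.2 p hp
      · intro h1
        rw [mem_filP] at h1
        exact ⟨mem_filP.2 ⟨h1.1, fun p hp => h1.2 p (by omega)⟩, h1.2 j le_rfl⟩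
    omega

theorem DCSetup.fil_top (h : DCSetup W P D E) (U : Submodule ℂ V) (k : ℕ) :
    filP P U k (k + 1) = U ⊓ totP P k := by
  ext x
  rw [mem_filP]
  constructor
  · exact fun hx => hx.1
  · intro hx
    refine ⟨hx, fun p hp => ?_⟩
    rw [← mem_totP.1 hx.2, tauP_apply, map_sum]
    refine Finset.sum_eq_zero fun a ha => ?_
    have := Finset.mem_range.1 ha
    exact h.diff _ _ _ _ _ (h.mem a (k - a) x) (by omega)

theorem DCSetup.map_fil_homog (h : DCSetup W P D E) {U : Submodule ℂ V} (hU : HomogP P U)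
    {k j : ℕ} (hj : j ≤ k) :
    (filP P U k (j + 1)).map (P j (k - j)) = U ⊓ W j (k - j) := by
  ext x
  constructor
  · rintro ⟨y, hy, rfl⟩
    exact ⟨hU _ _ _ (mem_filP.1 hy).1.1, h.mem _ _ _⟩
  · rintro ⟨h1, h2⟩
    refine ⟨x, mem_filP.2 ⟨⟨h1, h.le_tot (by omega) h2⟩, fun p hp => ?_⟩, h.same _ _ _ h2⟩
    exact h.diff _ _ _ _ _ h2 (by omega)

theorem DCSetup.finrank_homog [FiniteDimensional ℂ V] (h : DCSetup W P D E)
    {U : Submodule ℂ V} (hU : HomogP P U) (k : ℕ) :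
    Module.finrank ℂ ↥(U ⊓ totP P k) = ∑ p ∈ Finset.range (k + 1),
      Module.finrank ℂ ↥(U ⊓ W p (k - p)) := by
  rw [← h.fil_top, h.finrank_fil]
  refine Finset.sum_congr rfl fun p hp => ?_
  have := Finset.mem_range.1 hp
  rw [h.map_fil_homog hU (by omega)]

theorem DCSetup.map_fil_d (h : DCSetup W P D E) {k j : ℕ} (hj : j ≤ k) :
    (filP P (ker (D + E)) k (j + 1)).map (P j (k - j)) ≤ ker D ⊓ W j (k - j) := by
  rintro _ ⟨y, hy, rfl⟩
  obtain ⟨⟨h1, h2⟩, h3⟩ := mem_filP.1 hy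
  refine ⟨?_, h.mem _ _ _⟩
  rw [mem_ker, LinearMap.add_apply] at h1
  have h4 := congrArg (P (j + 1) (k - j)) h1
  rw [map_add, h.projD, map_zero] at h4
  have h5 : P (j + 1) (k - j) (E y) = 0 := by
    rcases Nat.eq_zero_or_pos (k - j) with h0 | h0
    · rw [h0, h.projE0]
    · obtain ⟨m, hm⟩ : ∃ m, k - j = m + 1 := ⟨k - j - 1, by omega⟩
      have := h3 (j + 1) le_rfl
      rw [hm, h.projE, show m = k - (j + 1) by omega, this, map_zero]
  rw [h5, add_zero] at h4
  exact h4

theorem DCSetup.frolicher [FiniteDimensional ℂ V] (h : DCSetup W P D E) (k : ℕ) :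
    Module.finrank ℂ ↥(ker (D + E) ⊓ totP P k) ≤ Module.finrank ℂ ↥(ker D ⊓ totP P k) := by
  rw [h.finrank_homog h.homogKerD, ← h.fil_top, h.finrank_fil]
  refine Finset.sum_le_sum fun p hp => ?_
  have := Finset.mem_range.1 hp
  exact Submodule.finrank_mono (h.map_fil_d (by omega))

theorem DCSetup.frolicher_eq [FiniteDimensional ℂ V] (h : DCSetup W P D E) (k : ℕ)
    (heq : Module.finrank ℂ ↥(ker (D + E) ⊓ totP P k) = Module.finrank ℂ ↥(ker D ⊓ totP P k))
    {u : V} (hu : u ∈ totP P k) (hDu : D u = 0) : E u ∈ range D := by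
  rw [h.finrank_homog h.homogKerD, ← h.fil_top, h.finrank_fil] at heq
  have hle : ∀ p ∈ Finset.range (k + 1),
      Module.finrank ℂ ↥((filP P (ker (D + E)) k (p + 1)).map (P p (k - p))) ≤
        Module.finrank ℂ ↥(ker D ⊓ W p (k - p)) := fun p hp => by
    have := Finset.mem_range.1 hp
    exact Submodule.finrank_mono (h.map_fil_d (by omega))
  rw [Finset.sum_eq_sum_iff_of_le hle] at heq
  rw [← mem_totP.1 hu, tauP_apply, map_sum]
  refine Submodule.sum_mem _ fun p hp => ?_
  have hpk := Finset.mem_range.1 hp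
  have he := Submodule.eq_of_le_of_finrank_eq (h.map_fil_d (by omega)) (heq p hp)
  have hmem : P p (k - p) u ∈ ker D ⊓ W p (k - p) :=
    ⟨h.homogKerD _ _ _ hDu, h.mem _ _ _⟩
  rw [← he] at hmem
  obtain ⟨y, hy, hyu⟩ := hmem
  have h1 := (mem_filP.1 hy).1.1
  rw [mem_ker, LinearMap.add_apply] at h1
  have h4 := congrArg (P p (k - p + 1)) h1
  rw [map_add, h.projE, map_zero, hyu] at h4
  rw [eq_neg_of_add_eq_zero_right h4]
  exact Submodule.neg_mem _ (h.homogRangeD _ _ _ ⟨y, rfl⟩)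

theorem DCSetup.rank_nullity [FiniteDimensional ℂ V] (h : DCSetup W P D E) (f : V →ₗ[ℂ] V)
    (hf : ∀ k x, tauP P (k + 1) (f x) = f (tauP P k x)) (k : ℕ) :
    Module.finrank ℂ ↥(range f ⊓ totP P (k + 1)) + Module.finrank ℂ ↥(ker f ⊓ totP P k)
      = Module.finrank ℂ ↥(totP P k) := by
  have hrn := LinearMap.finrank_range_add_finrank_ker (f.domRestrict (totP P k))
  rw [LinearMap.range_domRestrict] at hrn
  have h1 : (totP P k).map f = range f ⊓ totP P (k + 1) := by
    ext x
    constructor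
    · rintro ⟨y, hy, rfl⟩
      exact ⟨⟨y, rfl⟩, mem_totP.2 (by rw [hf, mem_totP.1 hy])⟩
    · rintro ⟨⟨y, rfl⟩, hy⟩
      exact ⟨tauP P k y, h.tau_mem k y, by rw [← hf, mem_totP.1 hy]⟩
  have hk : Module.finrank ℂ ↥(ker (f.domRestrict (totP P k)))
      = Module.finrank ℂ ↥(ker f ⊓ totP P k) := by
    rw [← Submodule.finrank_map_subtype_eq]
    congr 2
    all_goals
    ext x
    simp [and_comm]
  rw [h1, hk] at hrn
  exact hrn

theorem DCSetup.range_zero (f : V →ₗ[ℂ] V)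
    (hf : ∀ x, tauP P 0 (f x) = 0) : range f ⊓ totP P 0 = ⊥ := by
  rw [eq_bot_iff]
  rintro _ ⟨⟨y, rfl⟩, hy⟩
  rw [Submodule.mem_bot, ← mem_totP.1 hy, hf]

theorem DCSetup.rangeD_le [FiniteDimensional ℂ V] (h : DCSetup W P D E) (k : ℕ) :
    Module.finrank ℂ ↥(range D ⊓ totP P k) ≤ Module.finrank ℂ ↥(range (D + E) ⊓ totP P k) := by
  cases k with
  | zero => rw [DCSetup.range_zero D h.tauD0]; simp
  | succ k =>
    have h1 := h.rank_nullity D h.tauD k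
    have h2 := h.rank_nullity (D + E) (fun k x => by
      simp only [LinearMap.add_apply, map_add, h.tauD, h.tauE]) k
    have h3 := h.frolicher k
    omega

theorem DCSetup.main [FiniteDimensional ℂ V] (h : DCSetup W P D E) :
    (∀ k : ℕ, 2 * bNum W D E k ≤ bcSum W D E k + aSum W D E k) ∧
    ((∀ k : ℕ, bcSum W D E k + aSum W D E k = 2 * bNum W D E k) ↔
      ker D ⊓ ker E ⊓ range (D + E) = range (D ∘ₗ E)) := by
  -- elementary inclusions
  have i1 : range (D ∘ₗ E) ≤ ker D ⊓ ker E := by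
    rintro _ ⟨x, rfl⟩
    simp [h.dd, h.ed, h.ee]
  have i2 : range D ⊔ range E ≤ ker (D ∘ₗ E) := by
    refine sup_le ?_ ?_
    · rintro _ ⟨x, rfl⟩
      simp [h.dd, h.ed]
    · rintro _ ⟨x, rfl⟩
      simp [h.ee]
  have i3 : range (D + E) ≤ ker (D + E) := by
    rintro _ ⟨x, rfl⟩
    simp [h.dd, h.ed, h.ee]
  have i4 : range (D ∘ₗ E) ≤ range (D + E) := by
    rintro _ ⟨x, rfl⟩
    exact ⟨E x, by simp [h.ee]⟩
  have hbc : ∀ k, bcSum W D E k = Module.finrank ℂ ↥(ker D ⊓ ker E ⊓ totP P k) -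
      Module.finrank ℂ ↥(range (D ∘ₗ E) ⊓ totP P k) := fun k => by
    rw [h.finrank_homog (h.homogKerD.inf h.homogKerE), h.finrank_homog h.homogRangeDE, bcSum]
    exact Finset.sum_tsub_distrib _ fun p _ => Submodule.finrank_mono (inf_le_inf_right _ i1)
  have ha : ∀ k, aSum W D E k = Module.finrank ℂ ↥(ker (D ∘ₗ E) ⊓ totP P k) -
      Module.finrank ℂ ↥((range D ⊔ range E) ⊓ totP P k) := fun k => by
    rw [h.finrank_homog h.homogKerDE, h.finrank_homog (h.homogRangeD.sup h.homogRangeE), aSum]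
    exact Finset.sum_tsub_distrib _ fun p _ => Submodule.finrank_mono (inf_le_inf_right _ i2)
  have hb : ∀ k, bNum W D E k = Module.finrank ℂ ↥(ker (D + E) ⊓ totP P k) -
      Module.finrank ℂ ↥(range (D + E) ⊓ totP P k) := fun k => by
    rw [bNum, h.iSup_eq]
  have m1 := fun k => Submodule.finrank_mono (inf_le_inf_right (totP P k) i1)
  have m2 := fun k => Submodule.finrank_mono (inf_le_inf_right (totP P k) i2)
  have m3 := fun k => Submodule.finrank_mono (inf_le_inf_right (totP P k) i3)
  have fD := h.frolicher
  have rD := h.rangeD_le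
  have fE : ∀ k, Module.finrank ℂ ↥(ker (D + E) ⊓ totP P k) ≤
      Module.finrank ℂ ↥(ker E ⊓ totP P k) := fun k => by
    have := h.swap.frolicher k
    rwa [totP_swap (P := P), add_comm E D] at this
  have rE : ∀ k, Module.finrank ℂ ↥(range E ⊓ totP P k) ≤
      Module.finrank ℂ ↥(range (D + E) ⊓ totP P k) := fun k => by
    have := h.swap.rangeD_le k
    rwa [totP_swap (P := P), add_comm E D] at this
  have kle : ∀ k, (ker D ⊓ totP P k) ⊔ (ker E ⊓ totP P k) ≤ ker (D ∘ₗ E) ⊓ totP P k := by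
    intro k
    refine sup_le ?_ ?_
    · rintro x ⟨hx, hxt⟩
      refine ⟨?_, hxt⟩
      have : D (E x) = - E (D x) := eq_neg_of_add_eq_zero_left (h.de x)
      rw [SetLike.mem_coe, mem_ker] at hx
      simp [this, hx]
    · rintro x ⟨hx, hxt⟩
      refine ⟨?_, hxt⟩
      rw [SetLike.mem_coe, mem_ker] at hx
      simp [hx]
  have rle : ∀ k, range (D ∘ₗ E) ⊓ totP P k ≤ (range D ⊓ totP P k) ⊓ (range E ⊓ totP P k) := by
    rintro k _ ⟨⟨x, rfl⟩, hx⟩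
    refine ⟨⟨⟨E x, rfl⟩, hx⟩, ⟨⟨- D x, ?_⟩, hx⟩⟩
    simp [h.ed]
  have keq : ∀ k, (ker D ⊓ totP P k) ⊓ (ker E ⊓ totP P k) = ker D ⊓ ker E ⊓ totP P k :=
    fun k => (inf_inf_distrib_right _ _ _).symm
  have req : ∀ k, (range D ⊓ totP P k) ⊔ (range E ⊓ totP P k)
      = (range D ⊔ range E) ⊓ totP P k := by
    intro k
    apply le_antisymm
    · exact sup_le (inf_le_inf_right _ le_sup_left) (inf_le_inf_right _ le_sup_right)
    · rintro x ⟨hx, hxt⟩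
      obtain ⟨y, hy, z, hz, rfl⟩ := Submodule.mem_sup.1 hx
      rw [← mem_totP.1 hxt, map_add]
      exact Submodule.add_mem_sup ⟨h.homogRangeD.tau k hy, h.tau_mem k y⟩
        ⟨h.homogRangeE.tau k hz, h.tau_mem k z⟩
  have s1 := fun k => Submodule.finrank_sup_add_finrank_inf_eq (ker D ⊓ totP P k) (ker E ⊓ totP P k)
  have s2 := fun k =>
    Submodule.finrank_sup_add_finrank_inf_eq (range D ⊓ totP P k) (range E ⊓ totP P k)
  have klem := fun k => Submodule.finrank_mono (kle k)
  have rlem := fun k => Submodule.finrank_mono (rle k)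
  have ineq : ∀ k : ℕ, 2 * bNum W D E k ≤ bcSum W D E k + aSum W D E k := by
    intro k
    rw [hbc, ha, hb]
    have a1 := s1 k
    have a2 := s2 k
    rw [keq] at a1
    rw [req] at a2
    have := m1 k; have := m2 k; have := m3 k; have := fD k; have := fE k
    have := rD k; have := rE k; have := klem k; have := rlem k
    omega
  refine ⟨ineq, ?_, ?_⟩
  · intro heq
    have key : ∀ k, Module.finrank ℂ ↥(ker (D + E) ⊓ totP P k)
          = Module.finrank ℂ ↥(ker D ⊓ totP P k) ∧
        Module.finrank ℂ ↥(ker (D + E) ⊓ totP P k)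
          = Module.finrank ℂ ↥(ker E ⊓ totP P k) ∧
        (ker D ⊓ totP P k) ⊔ (ker E ⊓ totP P k) = ker (D ∘ₗ E) ⊓ totP P k ∧
        range (D ∘ₗ E) ⊓ totP P k = (range D ⊓ totP P k) ⊓ (range E ⊓ totP P k) := by
      intro k
      have a0 := heq k
      rw [hbc, ha, hb] at a0
      have a1 := s1 k
      have a2 := s2 k
      rw [keq] at a1
      rw [req] at a2
      have := m1 k; have := m2 k; have := m3 k; have := fD k; have := fE k
      have := rD k; have := rE k; have := klem k; have := rlem k
      refine ⟨by omega, by omega, Submodule.eq_of_le_of_finrank_eq (kle k) (by omega),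
        Submodule.eq_of_le_of_finrank_eq (rle k) (by omega)⟩
    have hom : ∀ k a, a ∈ totP P k → D (E a) = 0 → (D + E) a ∈ range (D ∘ₗ E) := by
      intro k a hat hDE
      obtain ⟨e1, e2, e3, -⟩ := key k
      have e4 := (key (k + 1)).2.2.2
      have hmem : a ∈ ker (D ∘ₗ E) ⊓ totP P k := ⟨by simpa using hDE, hat⟩
      rw [← e3] at hmem
      obtain ⟨u, ⟨hu, hut⟩, v, ⟨hv, hvt⟩, rfl⟩ := Submodule.mem_sup.1 hmem
      rw [SetLike.mem_coe, mem_ker] at hu hv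
      have q1 : E u ∈ range D := h.frolicher_eq k e1 hut hu
      have q2 : D v ∈ range E := by
        refine h.swap.frolicher_eq k ?_ (by rw [totP_swap (P := P)]; exact hvt) hv
        rw [totP_swap (P := P), add_comm E D]; exact e2
      have q3 : E u ∈ range (D ∘ₗ E) ⊓ totP P (k + 1) := by
        have ht : E u ∈ totP P (k + 1) := mem_totP.2 (by rw [h.tauE, mem_totP.1 hut])
        rw [e4]
        exact ⟨⟨q1, ht⟩, ⟨⟨u, rfl⟩, ht⟩⟩
      have q4 : D v ∈ range (D ∘ₗ E) ⊓ totP P (k + 1) := by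
        have ht : D v ∈ totP P (k + 1) := mem_totP.2 (by rw [h.tauD, mem_totP.1 hvt])
        rw [e4]
        exact ⟨⟨⟨v, rfl⟩, ht⟩, ⟨q2, ht⟩⟩
      have : (D + E) (u + v) = E u + D v := by
        simp [hu, hv, add_comm]
      rw [this]
      exact add_mem q3.1 q4.1
    refine le_antisymm ?_ (le_inf i1 i4)
    rintro _ ⟨⟨hx1, hx2⟩, a, rfl⟩
    have hDE : D (E a) = 0 := by
      have : D ((D + E) a) = 0 := hx1
      simpa [h.dd] using this
    obtain ⟨s, hs⟩ := h.tot a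
    rw [hs, map_sum]
    refine Submodule.sum_mem _ fun i _ => ?_
    refine hom (i.1 + i.2) _ (h.le_tot rfl (h.mem _ _ _)) ?_
    exact h.homogKerDE i.1 i.2 a (by simpa using hDE)
  · intro hl k
    refine le_antisymm ?_ (ineq k)
    -- components
    have comp : ∀ a, D (E a) = 0 → D a ∈ range (D ∘ₗ E) ∧ E a ∈ range (D ∘ₗ E) := by
      have hom : ∀ p q a, a ∈ W p q → D (E a) = 0 →
          D a ∈ range (D ∘ₗ E) ∧ E a ∈ range (D ∘ₗ E) := by
        intro p q a haW hDE
        have hd : D a + E a ∈ range (D ∘ₗ E) := by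
          rw [← hl]
          refine ⟨⟨?_, ?_⟩, ⟨a, rfl⟩⟩
          · simp [h.dd, hDE]
          · simp [h.ee, h.ed, hDE]
        have c1 := h.homogRangeDE (p + 1) q _ hd
        have c2 := h.homogRangeDE p (q + 1) _ hd
        have hDa := h.dgr p q a haW
        have hEa := h.egr p q a haW
        rw [map_add, h.same _ _ _ hDa, h.diff _ _ _ _ _ hEa (by omega), add_zero] at c1
        rw [map_add, h.same _ _ _ hEa, h.diff _ _ _ _ _ hDa (by omega), zero_add] at c2
        exact ⟨c1, c2⟩
      intro a hDE
      have hh : ∀ i : ℕ × ℕ, D (P i.1 i.2 a) ∈ range (D ∘ₗ E) ∧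
          E (P i.1 i.2 a) ∈ range (D ∘ₗ E) := fun i =>
        hom i.1 i.2 _ (h.mem _ _ _) (h.homogKerDE i.1 i.2 a (by simpa using hDE))
      obtain ⟨s, hs⟩ := h.tot a
      rw [hs, map_sum, map_sum]
      exact ⟨Submodule.sum_mem _ fun i _ => (hh i).1, Submodule.sum_mem _ fun i _ => (hh i).2⟩
    -- injectivity of Bott-Chern into de Rham
    have t1 := Submodule.finrank_sup_add_finrank_inf_eq
      (ker D ⊓ ker E ⊓ totP P k) (range (D + E) ⊓ totP P k)
    rw [← inf_inf_distrib_right, hl] at t1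
    have t2 : (ker D ⊓ ker E ⊓ totP P k) ⊔ (range (D + E) ⊓ totP P k)
        ≤ ker (D + E) ⊓ totP P k := by
      refine sup_le (inf_le_inf_right _ ?_) (inf_le_inf_right _ i3)
      rintro x ⟨hx1, hx2⟩
      rw [SetLike.mem_coe, mem_ker] at hx1 hx2
      simp [hx1, hx2]
    have t2' := Submodule.finrank_mono t2
    -- surjectivity of de Rham onto Aeppli
    have t3 := Submodule.finrank_sup_add_finrank_inf_eq
      (ker (D + E) ⊓ totP P k) ((range D ⊔ range E) ⊓ totP P k)
    have t4 : ker (D ∘ₗ E) ⊓ totP P k ≤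
        (ker (D + E) ⊓ totP P k) ⊔ ((range D ⊔ range E) ⊓ totP P k) := by
      rintro a ⟨haE, hat⟩
      have hDE : D (E a) = 0 := haE
      obtain ⟨⟨b, hb1⟩, ⟨c, hc1⟩⟩ := comp a hDE
      simp only [LinearMap.comp_apply] at hb1 hc1
      have hS : E b - D c ∈ range D ⊔ range E := by
        refine Submodule.sub_mem _ ?_ ?_
        · exact Submodule.mem_sup_right ⟨b, rfl⟩
        · exact Submodule.mem_sup_left ⟨c, rfl⟩
      have hz : D (a - (E b - D c)) + E (a - (E b - D c)) = 0 := by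
        simp only [map_sub, h.dd, h.ee, h.ed, hb1, hc1]
        abel
      have hz2 : tauP P k (a - (E b - D c)) ∈ ker (D + E) := by
        have := congrArg (tauP P (k + 1)) hz
        rw [map_add, h.tauD, h.tauE, map_zero] at this
        exact this
      have hsum : a = tauP P k (a - (E b - D c)) + tauP P k (E b - D c) := by
        rw [← map_add, sub_add_cancel, mem_totP.1 hat]
      rw [hsum]
      exact Submodule.add_mem_sup ⟨hz2, h.tau_mem _ _⟩
        ⟨(h.homogRangeD.sup h.homogRangeE).tau k hS, h.tau_mem _ _⟩
    have t4' := Submodule.finrank_mono t4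
    have t5 : range (D + E) ⊓ totP P k ≤
        (ker (D + E) ⊓ totP P k) ⊓ ((range D ⊔ range E) ⊓ totP P k) := by
      refine le_inf (inf_le_inf_right _ i3) (inf_le_inf_right _ ?_)
      rintro _ ⟨x, rfl⟩
      exact Submodule.add_mem_sup ⟨x, rfl⟩ ⟨x, rfl⟩
    have t5' := Submodule.finrank_mono t5
    rw [hbc, ha, hb]
    have := m1 k; have := m2 k; have := m3 k
    omega

end helpers

/-- Angella–Tomassini inequality: for a bounded double complex of finite-dimensional
spaces, `h_BC^k + h_A^k ≥ 2 b_k` for all `k`, with equality for all `k` iff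
`ker ∂ ∩ ker δ ∩ Im d = Im ∂δ` (the ∂∂̄-lemma). -/
theorem stmt17 {V : Type*} [AddCommGroup V] [Module ℂ V] [FiniteDimensional ℂ V]
    (Vpq : ℕ → ℕ → Submodule ℂ V)
    (hinternal : DirectSum.IsInternal (fun pq : ℕ × ℕ => Vpq pq.1 pq.2))
    (D E : V →ₗ[ℂ] V)
    (hDgr : ∀ p q, ∀ x ∈ Vpq p q, D x ∈ Vpq (p + 1) q)
    (hEgr : ∀ p q, ∀ x ∈ Vpq p q, E x ∈ Vpq p (q + 1))
    (hD : D ∘ₗ D = 0) (hE : E ∘ₗ E = 0) (hDE : D ∘ₗ E + E ∘ₗ D = 0) :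
    (∀ k : ℕ, 2 * bNum Vpq D E k ≤ bcSum Vpq D E k + aSum Vpq D E k) ∧
    ((∀ k : ℕ, bcSum Vpq D E k + aSum Vpq D E k = 2 * bNum Vpq D E k) ↔
      ker D ⊓ ker E ⊓ range (D + E) = range (D ∘ₗ E)) := by
  classical
  letI := hinternal.chooseDecomposition
  have h : DCSetup Vpq (fun p q => (Vpq p q).subtype ∘ₗ
      (DirectSum.component ℂ (ℕ × ℕ) (fun pq : ℕ × ℕ => ↥(Vpq pq.1 pq.2)) (p, q)) ∘ₗ
      (DirectSum.decomposeLinearEquiv (fun pq : ℕ × ℕ => Vpq pq.1 pq.2)).toLinearMap) D E := by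
    refine ⟨?_, ?_, ?_, ?_, hDgr, hEgr, ?_, ?_, ?_⟩
    · intro p q x
      exact Subtype.property _
    · intro p q x hx
      exact DirectSum.decompose_of_mem_same (fun pq : ℕ × ℕ => Vpq pq.1 pq.2) (i := (p, q)) hx
    · intro p q p' q' x hx hne
      refine DirectSum.decompose_of_mem_ne (fun pq : ℕ × ℕ => Vpq pq.1 pq.2)
        (i := (p', q')) (j := (p, q)) hx ?_
      intro he
      simp only [Prod.mk.injEq] at he
      omega
    · intro x
      exact ⟨_, (DirectSum.sum_support_decompose (fun pq : ℕ × ℕ => Vpq pq.1 pq.2) x).symm⟩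
    · exact fun x => LinearMap.congr_fun hD x
    · exact fun x => LinearMap.congr_fun hE x
    · exact fun x => LinearMap.congr_fun hDE x
  exact h.main
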